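/- Merging two reconstruction symbols with differing posteriors strictly decreases mutual information: let p be a probability mass function on a finite type 𝒳, k : 𝒳 → PMF(𝒳') a channel with induced joint P(x, x̂) = p(x)·k(x)(x̂), and let x̂₁ ≠ x̂₂ be points of 𝒳' with marginal probabilities P(X̂ = x̂₁) > 0 and P(X̂ = x̂₂) > 0 such that there exists x ∈ 𝒳 with P(X = x | X̂ = x̂₁) ≠ P(X = x | X̂ = x̂₂). Define the merged channel k̃ by k̃(x)(x̂₁) = k(x)(x̂₁) + k(x)(x̂₂), k̃(x)(x̂₂) = 0, and k̃(x)(x̂) = k(x)(x̂) for all other x̂. Then the mutual information of the joint induced by (p, k̃) is strictly smaller than that of the joint induced by (p, k): I(X;X̃) < I(X;X̂). -/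

import Mathlib

open scoped BigOperators

/-- Joint distribution P(a,b) = p(a)·k(a)(b) induced by a source `p` and a channel `k`,
as a real number. -/
noncomputable def jointP {A B : Type*} [Fintype A] [Fintype B] (p : PMF A) (k : A → PMF B)
    (a : A) (b : B) : ℝ :=
  (p a * k a b).toReal

/-- Marginal distribution of the second coordinate of the joint induced by `(p, k)`. -/
noncomputable def margSnd {A B : Type*} [Fintype A] [Fintype B] (p : PMF A) (k : A → PMF B)
    (b : B) : ℝ :=
  ∑ a, jointP p k a b

/-- Mutual information I(A;B) = ∑_{a,b} P(a,b)·log(P(a,b)/(P(a)·P(b))) of the joint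
induced by `(p, k)`; the convention 0·log 0 = 0 holds automatically in Lean. -/
noncomputable def mutualInfo {A B : Type*} [Fintype A] [Fintype B] (p : PMF A)
    (k : A → PMF B) : ℝ :=
  ∑ a, ∑ b, jointP p k a b * Real.log (jointP p k a b / ((p a).toReal * margSnd p k b))

/-- Expected distortion E[d(A,B)] under the joint induced by `(p, k)`. -/
noncomputable def expDist {A B : Type*} [Fintype A] [Fintype B] (p : PMF A) (k : A → PMF B)
    (d : A → B → ℝ) : ℝ :=
  ∑ a, ∑ b, jointP p k a b * d a b

/-- Rate-distortion function: infimum of mutual information over all channels `A → PMF B`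
meeting the expected-distortion constraint `≤ D`. -/
noncomputable def rate {A B : Type*} [Fintype A] [Fintype B] (p : PMF A) (d : A → B → ℝ)
    (D : ℝ) : ℝ :=
  sInf { r : ℝ | ∃ k : A → PMF B, expDist p k d ≤ D ∧ r = mutualInfo p k }

/-- Conditional probability P(A = a | B = b) under the joint induced by `(p, k)`. -/
noncomputable def condProb {A B : Type*} [Fintype A] [Fintype B] (p : PMF A) (k : A → PMF B)
    (a : A) (b : B) : ℝ :=
  jointP p k a b / margSnd p k b

/-- The strict two-term log-sum inequality. -/
theorem add_mul_log_div_add_lt {a b m n : ℝ} (ha : 0 ≤ a) (hb : 0 ≤ b) (hm : 0 < m) (hn : 0 < n)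
    (hne : a / m ≠ b / n) :
    (a + b) * Real.log ((a + b) / (m + n)) < a * Real.log (a / m) + b * Real.log (b / n) := by
  have hmn : 0 < m + n := add_pos hm hn
  have h := Real.strictConvexOn_mul_log.2 (Set.mem_Ici.2 (div_nonneg ha hm.le))
    (Set.mem_Ici.2 (div_nonneg hb hn.le)) hne (div_pos hm hmn) (div_pos hn hmn)
    (by field_simp)
  simp only [smul_eq_mul] at h
  have hmean : m / (m + n) * (a / m) + n / (m + n) * (b / n) = (a + b) / (m + n) := by
    field_simp
  rw [hmean] at h
  calc (a + b) * Real.log ((a + b) / (m + n))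
      = (m + n) * ((a + b) / (m + n) * Real.log ((a + b) / (m + n))) := by
        rw [← mul_assoc, mul_div_cancel₀ _ hmn.ne']
    _ < _ := mul_lt_mul_of_pos_left h hmn
    _ = a * Real.log (a / m) + b * Real.log (b / n) := by
        generalize Real.log (a / m) = s
        generalize Real.log (b / n) = t
        field_simp

/-- The two-term log-sum inequality. -/
theorem add_mul_log_div_add_le {a b m n : ℝ} (ha : 0 ≤ a) (hb : 0 ≤ b) (hm : 0 < m) (hn : 0 < n) :
    (a + b) * Real.log ((a + b) / (m + n)) ≤ a * Real.log (a / m) + b * Real.log (b / n) := by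
  by_cases h : a / m = b / n
  · have hratio : (a + b) / (m + n) = b / n := by
      rw [div_eq_div_iff hm.ne' hn.ne'] at h
      rw [div_eq_div_iff (add_pos hm hn).ne' hn.ne']
      linarith
    rw [hratio, h, add_mul]
  · exact (add_mul_log_div_add_lt ha hb hm hn h).le

/-- If two functions agree off two points, their sums differ only by the values at these points. -/
theorem Fintype.sum_sub_sum_eq_of_eq_off_pair {ι : Type*} [Fintype ι] {f g : ι → ℝ} {i j : ι}
    (hij : i ≠ j) (h : ∀ b, b ≠ i → b ≠ j → g b = f b) :
    ∑ b, f b - ∑ b, g b = (f i + f j) - (g i + g j) := by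
  rw [← Finset.sum_sub_distrib, Fintype.sum_eq_add i j hij]
  · ring
  · rintro b ⟨hi, hj⟩
    rw [h b hi hj, sub_self]

section Joint

variable {A B : Type*} [Fintype A] [Fintype B] (p : PMF A)

theorem jointP_nonneg (k : A → PMF B) (a : A) (b : B) : 0 ≤ jointP p k a b :=
  ENNReal.toReal_nonneg

theorem jointP_eq_zero_of_source_eq_zero {p : PMF A} {a : A} (h : (p a).toReal = 0)
    (k : A → PMF B) (b : B) : jointP p k a b = 0 := by
  rw [jointP, ENNReal.toReal_mul, h, zero_mul]

theorem jointP_of_eq_add {k l : A → PMF B} {a : A} {b c d : B} (h : l a b = k a c + k a d) :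
    jointP p l a b = jointP p k a c + jointP p k a d := by
  simp only [jointP, ENNReal.toReal_mul]
  rw [h, ENNReal.toReal_add (PMF.apply_ne_top _ _) (PMF.apply_ne_top _ _), mul_add]

theorem jointP_of_eq_zero {k : A → PMF B} {a : A} {b : B} (h : k a b = 0) :
    jointP p k a b = 0 := by
  simp [jointP, h]

end Joint

/-- Merging two reconstruction symbols of positive marginal probability
with differing posteriors strictly decreases mutual information: the merged channel k̃
(k̃(x)(x̂₁) = k(x)(x̂₁) + k(x)(x̂₂), k̃(x)(x̂₂) = 0, and otherwise identical to k) satisfies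
I(X;X̃) < I(X;X̂). -/
theorem merge_strictly_decreases_mutualInfo
    {𝒳 𝒳' : Type*} [Fintype 𝒳] [Fintype 𝒳'] [Nonempty 𝒳] [Nonempty 𝒳']
    (p : PMF 𝒳) (k : 𝒳 → PMF 𝒳')
    (xhat₁ xhat₂ : 𝒳') (hne : xhat₁ ≠ xhat₂)
    (hpos₁ : 0 < margSnd p k xhat₁) (hpos₂ : 0 < margSnd p k xhat₂)
    (hpost : ∃ x : 𝒳, condProb p k x xhat₁ ≠ condProb p k x xhat₂)
    (ktil : 𝒳 → PMF 𝒳')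
    (hk₁ : ∀ x, ktil x xhat₁ = k x xhat₁ + k x xhat₂)
    (hk₂ : ∀ x, ktil x xhat₂ = 0)
    (hk₃ : ∀ x xhat, xhat ≠ xhat₁ → xhat ≠ xhat₂ → ktil x xhat = k x xhat) :
    mutualInfo p ktil < mutualInfo p k := by
  have hj₁ x : jointP p ktil x xhat₁ = jointP p k x xhat₁ + jointP p k x xhat₂ :=
    jointP_of_eq_add p (hk₁ x)
  have hj₂ x : jointP p ktil x xhat₂ = 0 := jointP_of_eq_zero p (hk₂ x)
  have hj₃ x b (h₁ : b ≠ xhat₁) (h₂ : b ≠ xhat₂) : jointP p ktil x b = jointP p k x b := by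
    rw [jointP, jointP, hk₃ x b h₁ h₂]
  have hm₁ : margSnd p ktil xhat₁ = margSnd p k xhat₁ + margSnd p k xhat₂ := by
    simp only [margSnd, hj₁, Finset.sum_add_distrib]
  have hm₃ b (h₁ : b ≠ xhat₁) (h₂ : b ≠ xhat₂) : margSnd p ktil b = margSnd p k b := by
    simp only [margSnd, hj₃ _ b h₁ h₂]
  have hrow x := Fintype.sum_sub_sum_eq_of_eq_off_pair
    (f := fun b => jointP p k x b *
      Real.log (jointP p k x b / ((p x).toReal * margSnd p k b)))
    (g := fun b => jointP p ktil x b *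
      Real.log (jointP p ktil x b / ((p x).toReal * margSnd p ktil b)))
    hne (fun b h₁ h₂ => by rw [hj₃ x b h₁ h₂, hm₃ b h₁ h₂])
  simp only [hj₁, hj₂, hm₁, zero_mul, add_zero, mul_add] at hrow
  obtain ⟨x₀, hx₀⟩ := hpost
  refine Finset.sum_lt_sum (fun x _ => ?_) ⟨x₀, Finset.mem_univ _, ?_⟩
  · rw [← sub_nonneg, hrow x, sub_nonneg]
    rcases (ENNReal.toReal_nonneg (a := p x)).eq_or_lt with hp | hp
    · simp [jointP_eq_zero_of_source_eq_zero hp.symm]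
    · exact add_mul_log_div_add_le (jointP_nonneg p k x _) (jointP_nonneg p k x _)
        (mul_pos hp hpos₁) (mul_pos hp hpos₂)
  · rw [← sub_pos, hrow x₀, sub_pos]
    rcases (ENNReal.toReal_nonneg (a := p x₀)).eq_or_lt with hp | hp
    · simp [condProb, jointP_eq_zero_of_source_eq_zero hp.symm] at hx₀
    · refine add_mul_log_div_add_lt (jointP_nonneg p k x₀ _) (jointP_nonneg p k x₀ _)
        (mul_pos hp hpos₁) (mul_pos hp hpos₂) fun h => hx₀ ?_
      rw [mul_comm, ← div_div, mul_comm (p x₀).toReal, ← div_div] at h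
      exact (div_left_inj' hp.ne').1 h
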